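/- arXiv:2301.04629 — 2 statements merged into one kernel-verified Lean document; each statement's English description precedes it below -/
import Mathlib

section
/- Let κ, μ, z be complex numbers with Re(μ + κ + 1/2) > 0 and Re(μ − κ + 1/2) > 0, and let z be a positive real number. Then the Whittaker function of the first kind admits the integral representation M_{κ,μ}(z) = (√π · Γ(2μ+1)) / (2^μ · Γ((μ+κ+1/2)/2) · Γ((μ−κ+1/2)/2)) · √z · ∫₀¹ ξ^{(−κ+1/2)/2 − 1} (1−ξ)^{(κ+1/2)/2 − 1} e^{(ξ−1/2)z} J_μ(√(ξ(1−ξ)) · z) dξ. -/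
open scoped Real

/-- Pochhammer symbol `(x)_n = x (x+1) ⋯ (x+n-1)`. -/
noncomputable def poch (x : ℂ) (n : ℕ) : ℂ := ∏ k ∈ Finset.range n, (x + k)

/-- Bessel function of the first kind `J_ν(z)` of complex order. -/
noncomputable def besselJ (ν z : ℂ) : ℂ :=
  ∑' n : ℕ, ((-1 : ℂ) ^ n / (Complex.Gamma (ν + n + 1) * n.factorial)) * (z / 2) ^ (ν + 2 * n)

/-- Whittaker function of the first kind `M_{κ,μ}(z)`. -/
noncomputable def whittakerM (κ μ z : ℂ) : ℂ :=
  Complex.exp (-z / 2) * z ^ (μ + 1 / 2) *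
    ∑' n : ℕ, poch (μ - κ + 1 / 2) n / (poch (2 * μ + 1) n * n.factorial) * z ^ n

/-! Expand `exp (ξ z)` and the Bessel function in powers of `z`: the integral becomes a double
series of Beta integrals. Summing first over the terms of total degree `N` in `z` turns the
coefficient of `z ^ N` into a finite sum: up to a factor depending on `N`, it is the `N`-th Taylor
coefficient of `(1 - x) ^ (-b) * ₂F₁(a, b; a + b + 1/2; x² / (4 (x - 1)))` with
`a = (μ + κ + 1/2) / 2` and `b = (μ - κ + 1/2) / 2`. By a quadratic transformation this function is
`₂F₁(2 b, a + b; 2 (a + b); x)`, whose coefficients give the confluent series of `M_{κ,μ}`.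
Legendre's duplication formula yields the constant. -/

section QuadraticTransformation

variable {K : Type*} [Field K]

lemma ascPochhammer_eval_ne_zero {x : K} (hx : ∀ k : ℕ, x ≠ -k) (n : ℕ) :
    (ascPochhammer K n).eval x ≠ 0 := by
  rw [ne_eq, ascPochhammer_eval_eq_zero_iff]
  rintro ⟨k, -, hk⟩
  exact hx k (by rw [hk, neg_neg])

/-- The `m`-th summand of the finite sum which, up to the factor `N!`, is the `N`-th Taylor
coefficient at `x = 0` of `(1 - x) ^ (-b) * ₂F₁(a, b; a + b + 1/2; x² / (4 (x - 1)))`.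
The descending factorial makes it vanish for `N < 2 * m`, so that the truncated subtraction `N - m`
is harmless. -/
noncomputable def quadraticTransformTerm (a b : K) (N m : ℕ) : K :=
  (-1 / 4) ^ m * N.descFactorial (2 * m) * (ascPochhammer K m).eval a *
    (ascPochhammer K (N - m)).eval b / (m.factorial * (ascPochhammer K m).eval (a + b + 1 / 2))

lemma quadraticTransformTerm_eq_zero (a b : K) {N m : ℕ} (h : N < 2 * m) :
    quadraticTransformTerm a b N m = 0 := by
  simp [quadraticTransformTerm, Nat.descFactorial_of_lt h]

lemma quadraticTransformTerm_succ_left (a b : K) (N m : ℕ) :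
    (N + 1 - 2 * m) * quadraticTransformTerm a b (N + 1) m =
      (N + 1) * (b + N - m) * quadraticTransformTerm a b N m := by
  rcases lt_or_ge N (2 * m) with h | h
  · rw [quadraticTransformTerm_eq_zero a b h, mul_zero]
    rcases (Nat.succ_le_of_lt h).lt_or_eq with h' | h'
    · rw [quadraticTransformTerm_eq_zero a b h', mul_zero]
    · have : (N : K) + 1 = 2 * m := mod_cast congrArg (Nat.cast : ℕ → K) h'
      rw [this, sub_self, zero_mul]
  · have hdesc : ((N : K) + 1 - 2 * m) * (N + 1).descFactorial (2 * m) =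
        (N + 1) * N.descFactorial (2 * m) := by
      have := congrArg (Nat.cast : ℕ → K) (Nat.succ_descFactorial N (2 * m))
      push_cast [Nat.cast_sub (h.trans N.le_succ)] at this
      exact this
    have hasc : (ascPochhammer K (N + 1 - m)).eval b =
        (ascPochhammer K (N - m)).eval b * (b + N - m) := by
      rw [Nat.sub_add_comm (by lia), ascPochhammer_succ_eval, Nat.cast_sub (by lia), add_sub_assoc]
    rw [quadraticTransformTerm, quadraticTransformTerm, hasc]
    linear_combination ((-1 / 4) ^ m * (ascPochhammer K m).eval a *
      ((ascPochhammer K (N - m)).eval b * (b + N - m)) /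
        (m.factorial * (ascPochhammer K m).eval (a + b + 1 / 2))) * hdesc

variable [CharZero K]

lemma quadraticTransformTerm_succ_succ (a b : K) (N m : ℕ) (hab : a + b + 1 / 2 + m ≠ 0) :
    -4 * (m + 1) * (a + b + 1 / 2 + m) * quadraticTransformTerm a b (N + 1) (m + 1) =
      (N + 1) * (a + m) * (N - 2 * m) * quadraticTransformTerm a b N m := by
  have hdesc : ((N + 1).descFactorial (2 * (m + 1)) : K) =
      (N + 1) * ((N - 2 * m) * N.descFactorial (2 * m)) := by
    rw [show 2 * (m + 1) = 2 * m + 1 + 1 by ring, Nat.succ_descFactorial_succ,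
      Nat.descFactorial_succ]
    rcases lt_or_ge N (2 * m) with h | h
    · simp [Nat.descFactorial_of_lt h]
    · push_cast [Nat.cast_sub h]
      ring
  have hm : (m : K) + 1 ≠ 0 := m.cast_add_one_ne_zero
  rw [quadraticTransformTerm, quadraticTransformTerm, hdesc, ascPochhammer_succ_eval,
    ascPochhammer_succ_eval, Nat.add_sub_add_right, Nat.factorial_succ, pow_succ]
  push_cast
  generalize (ascPochhammer K m).eval (a + b + 1 / 2) = P
  generalize a + b + 1 / 2 + (m : K) = Q at *
  field_simp

/-- The telescoping relation for the sum over `m`, as Zeilberger's algorithm produces it. -/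
lemma quadraticTransformTerm_recurrence (a b : K) (N m : ℕ) (hab : a + b + 1 / 2 + m ≠ 0) :
    (N + 1) * ((2 * (a + b) + N) * quadraticTransformTerm a b (N + 1) m -
        (2 * b + N) * (a + b + N) * quadraticTransformTerm a b N m) =
      -4 * (m + 1 : ℕ) * (a + b - 1 / 2 + (m + 1 : ℕ)) *
          quadraticTransformTerm a b (N + 1) (m + 1) -
        -4 * m * (a + b - 1 / 2 + m) * quadraticTransformTerm a b (N + 1) m := by
  have hright := quadraticTransformTerm_succ_succ a b N m hab
  have hleft := quadraticTransformTerm_succ_left a b N m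
  push_cast
  rcases eq_or_ne ((N : K) + 1) (2 * m) with h | h
  · have hzero : quadraticTransformTerm a b N m = 0 :=
      quadraticTransformTerm_eq_zero a b (by have : N + 1 = 2 * m := mod_cast h; lia)
    rw [hzero] at hright ⊢
    have hN : (N : K) = 2 * m - 1 := eq_sub_of_add_eq h
    rw [hN] at hright ⊢
    linear_combination -hright
  · apply mul_left_cancel₀ (sub_ne_zero.2 h)
    linear_combination ((N + 1) * (2 * (a + b) + N) - 4 * m * (a + b - 1 / 2 + m)) * hleft -
      (N + 1 - 2 * m) * hright

/-- The quadratic transformation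
`(1 - x) ^ (-b) * ₂F₁(a, b; a + b + 1/2; x² / (4 (x - 1))) = ₂F₁(2 b, a + b; 2 (a + b); x)`,
compared at `x ^ N`. -/
lemma sum_quadraticTransformTerm {a b : K} (hab : ∀ k : ℕ, 2 * (a + b) ≠ -k) {N M : ℕ}
    (hNM : N < 2 * M) :
    ∑ m ∈ Finset.range M, quadraticTransformTerm a b N m =
      (ascPochhammer K N).eval (2 * b) * (ascPochhammer K N).eval (a + b) /
        (ascPochhammer K N).eval (2 * (a + b)) := by
  have hhalf (m : ℕ) : a + b + 1 / 2 + m ≠ 0 := fun h =>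
    hab (2 * m + 1) (by push_cast; linear_combination 2 * h)
  induction N with
  | zero =>
    rw [Finset.sum_eq_single_of_mem 0 (Finset.mem_range.2 (by lia)) fun m _ hm =>
      quadraticTransformTerm_eq_zero a b (by lia)]
    simp [quadraticTransformTerm]
  | succ N ih =>
    have htel := Finset.sum_range_sub (fun m : ℕ =>
      -4 * m * (a + b - 1 / 2 + m) * quadraticTransformTerm a b (N + 1) m) M
    simp only [← quadraticTransformTerm_recurrence a b N _ (hhalf _)] at htel
    rw [quadraticTransformTerm_eq_zero a b hNM, ← Finset.mul_sum, Finset.sum_sub_distrib,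
      ← Finset.mul_sum, ← Finset.mul_sum, ih (by lia)] at htel
    simp only [Nat.cast_zero, mul_zero, zero_mul, sub_zero, mul_eq_zero,
      N.cast_add_one_ne_zero, false_or, sub_eq_zero] at htel
    have hP := ascPochhammer_eval_ne_zero hab N
    have hN : 2 * (a + b) + (N : K) ≠ 0 := fun h => hab N (eq_neg_of_add_eq_zero_left h)
    apply mul_left_cancel₀ hN
    rw [htel, ascPochhammer_succ_eval, ascPochhammer_succ_eval, ascPochhammer_succ_eval]
    field_simp

end QuadraticTransformation

lemma hasSum_sum_range_of_two_mul_add {M : Type*} [AddCommMonoid M] [TopologicalSpace M]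
    [ContinuousAdd M] [RegularSpace M] {f : ℕ × ℕ → M} {s : M} (hf : HasSum f s) :
    HasSum (fun N => ∑ m ∈ Finset.range (N / 2 + 1), f (m, N - 2 * m)) s := by
  let e : (Σ N : ℕ, Finset.range (N / 2 + 1)) → ℕ × ℕ := fun x => (x.2, x.1 - 2 * x.2)
  have he : e.Bijective := by
    refine ⟨?_, fun x => ⟨⟨2 * x.1 + x.2, x.1, Finset.mem_range.2 (by lia)⟩, by simp [e]⟩⟩
    rintro ⟨N, m, hm⟩ ⟨N', m', hm'⟩ h
    simp only [e, Prod.mk.injEq] at h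
    rw [Finset.mem_range] at hm hm'
    obtain rfl : m = m' := h.1
    obtain rfl : N = N' := by lia
    rfl
  refine ((Equiv.ofBijective e he).hasSum_iff.2 hf).sigma fun N => ?_
  rw [← Finset.sum_coe_sort]
  exact hasSum_fintype _

section BetaIntegral

open Complex MeasureTheory

lemma ne_neg_natCast_of_re_pos {x : ℂ} (hx : 0 < x.re) (k : ℕ) : x ≠ -k := by
  rintro rfl
  simp only [neg_re, natCast_re, Left.neg_pos_iff] at hx
  exact (Nat.cast_nonneg k).not_gt hx

lemma Gamma_add_natCast {x : ℂ} (hx : ∀ k : ℕ, x ≠ -k) (n : ℕ) :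
    Gamma (x + n) = Gamma x * (ascPochhammer ℂ n).eval x := by
  rw [← Gamma_add_nat_div_Gamma_eq x hx, mul_div_cancel₀ _ (Gamma_ne_zero hx)]

variable {u v : ℂ}

lemma betaIntegral_add_natCast (hu : 0 < u.re) (hv : 0 < v.re) (p q : ℕ) :
    betaIntegral (u + p) (v + q) = betaIntegral u v *
      ((ascPochhammer ℂ p).eval u * (ascPochhammer ℂ q).eval v /
        (ascPochhammer ℂ (p + q)).eval (u + v)) := by
  have huv : 0 < (u + v).re := add_pos hu hv
  have hu' : 0 < (u + p).re := by simpa using add_pos_of_pos_of_nonneg hu p.cast_nonneg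
  have hv' : 0 < (v + q).re := by simpa using add_pos_of_pos_of_nonneg hv q.cast_nonneg
  have hsum : u + p + (v + q) = u + v + (p + q : ℕ) := by push_cast; ring
  rw [betaIntegral_eq_Gamma_mul_div _ _ hu' hv', betaIntegral_eq_Gamma_mul_div _ _ hu hv, hsum,
    Gamma_add_natCast (ne_neg_natCast_of_re_pos hu),
    Gamma_add_natCast (ne_neg_natCast_of_re_pos hv),
    Gamma_add_natCast (ne_neg_natCast_of_re_pos huv), div_mul_div_comm]
  ring

lemma cpow_add_natCast_sub_one {x : ℂ} (hx : x ≠ 0) (s : ℂ) (n : ℕ) :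
    x ^ (s + n - 1) = x ^ (s - 1) * x ^ n := by
  rw [add_sub_right_comm, cpow_add _ _ hx, cpow_natCast]

lemma norm_pow_mul_one_sub_pow_le_one {x : ℝ} (hx : x ∈ Set.Icc (0 : ℝ) 1) (m n : ℕ) :
    ‖(x : ℂ) ^ m * (1 - (x : ℂ)) ^ n‖ ≤ 1 := by
  have hx' : 0 ≤ 1 - x := sub_nonneg.2 hx.2
  rw [← ofReal_one, ← ofReal_sub, norm_mul, norm_pow, norm_pow, Complex.norm_of_nonneg hx.1,
    Complex.norm_of_nonneg hx']
  exact mul_le_one₀ (pow_le_one₀ hx.1 hx.2) (pow_nonneg hx' n)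
    (pow_le_one₀ hx' (sub_le_self 1 hx.1))

lemma hasSum_mul_betaIntegral_add_natCast {ι : Type*} [Countable ι] (hu : 0 < u.re)
    (hv : 0 < v.re) {c : ι → ℂ} (hc : Summable fun i => ‖c i‖) (p q : ι → ℕ) {f : ℝ → ℂ}
    (hf : ∀ ξ ∈ Set.Ioo (0 : ℝ) 1,
      HasSum (fun i => c i * ((ξ : ℂ) ^ p i * (1 - (ξ : ℂ)) ^ q i)) (f ξ)) :
    HasSum (fun i => c i * betaIntegral (u + p i) (v + q i))
      (∫ ξ in (0 : ℝ)..1, (ξ : ℂ) ^ (u - 1) * (1 - (ξ : ℂ)) ^ (v - 1) * f ξ) := by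
  have hIoo : ∀ᵐ ξ : ℝ, ξ ∈ Set.uIoc 0 1 → ξ ∈ Set.Ioo (0 : ℝ) 1 := by
    filter_upwards [Measure.ae_ne volume (1 : ℝ)] with ξ hne hξ
    rw [Set.uIoc_of_le zero_le_one] at hξ
    exact ⟨hξ.1, hξ.2.lt_of_ne hne⟩
  have hsplit (i : ι) {ξ : ℝ} (hξ : ξ ∈ Set.Ioo (0 : ℝ) 1) :
      c i * ((ξ : ℂ) ^ (u + p i - 1) * (1 - (ξ : ℂ)) ^ (v + q i - 1)) =
        (ξ : ℂ) ^ (u - 1) * (1 - (ξ : ℂ)) ^ (v - 1) *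
          (c i * ((ξ : ℂ) ^ p i * (1 - (ξ : ℂ)) ^ q i)) := by
    rw [cpow_add_natCast_sub_one (ofReal_ne_zero.2 hξ.1.ne'),
      cpow_add_natCast_sub_one (mod_cast (sub_pos.2 hξ.2).ne')]
    ring
  simp only [betaIntegral, ← intervalIntegral.integral_const_mul]
  refine intervalIntegral.hasSum_integral_of_dominated_convergence
    (fun i ξ => ‖(ξ : ℂ) ^ (u - 1) * (1 - (ξ : ℂ)) ^ (v - 1)‖ * ‖c i‖) (fun i => ?_) (fun i => ?_)
    (ae_of_all _ fun ξ _ => hc.mul_left _) ?_ ?_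
  · exact Measurable.aestronglyMeasurable (by fun_prop)
  · filter_upwards [hIoo] with ξ hξ h
    rw [hsplit i (hξ h), norm_mul, norm_mul (c i)]
    gcongr
    exact mul_le_of_le_one_right (norm_nonneg _)
      (norm_pow_mul_one_sub_pow_le_one (Set.Ioo_subset_Icc_self (hξ h)) _ _)
  · simp only [tsum_mul_left]
    exact (betaIntegral_convergent hu hv).norm.mul_const _
  · filter_upwards [hIoo] with ξ hξ h
    simpa only [hsplit _ (hξ h)] using (hf ξ (hξ h)).mul_left _

end BetaIntegral

section RegularizedHypergeometric

open Complex

variable {s t : Multiset ℂ}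

lemma summable_norm_regularizedHGFunCoeff_mul_pow (h : s.card ≤ t.card) (z : ℂ) :
    Summable fun n => ‖regularizedHGFunCoeff s t n * z ^ n‖ := by
  have hz : z ∈ Metric.eball (0 : ℂ) (regularizedHGFunSeries s t).radius := by
    simp [radius_regularizedHGFunSeries_eq_top h]
  simpa [mul_comm] using (regularizedHGFunSeries s t).summable_norm_apply hz

lemma hasSum_regularizedHGFun (h : s.card ≤ t.card) (z : ℂ) :
    HasSum (fun n => regularizedHGFunCoeff s t n * z ^ n) (regularizedHGFun s t z) := by
  have hz : z ∈ Metric.eball (0 : ℂ) (regularizedHGFunSeries s t).radius := by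
    simp [radius_regularizedHGFunSeries_eq_top h]
  simpa [mul_comm, regularizedHGFun] using (regularizedHGFunSeries s t).hasSum hz

lemma summable_norm_regularizedHGFunCoeff_mul_pow_mul {s' t' : Multiset ℂ} (h : s.card ≤ t.card)
    (h' : s'.card ≤ t'.card) (w z : ℂ) :
    Summable fun x : ℕ × ℕ => ‖regularizedHGFunCoeff s t x.1 * w ^ x.1 *
      (regularizedHGFunCoeff s' t' x.2 * z ^ x.2)‖ := by
  have hs := summable_norm_regularizedHGFunCoeff_mul_pow h w
  have hs' := summable_norm_regularizedHGFunCoeff_mul_pow h' z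
  exact (hs.mul_norm hs' :)

lemma hasSum_regularizedHGFun_mul {s' t' : Multiset ℂ} (h : s.card ≤ t.card)
    (h' : s'.card ≤ t'.card) (w z : ℂ) :
    HasSum (fun x : ℕ × ℕ => regularizedHGFunCoeff s t x.1 * w ^ x.1 *
      (regularizedHGFunCoeff s' t' x.2 * z ^ x.2))
      (regularizedHGFun s t w * regularizedHGFun s' t' z) := by
  have hs := hasSum_regularizedHGFun h w
  have hs' := hasSum_regularizedHGFun h' z
  have hsum := (summable_norm_regularizedHGFunCoeff_mul_pow_mul h h' w z).of_norm
  exact (hs.mul hs' hsum :)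

end RegularizedHypergeometric

section EulerIntegral

open Complex

variable {a b : ℂ}

lemma regularizedHGFunCoeff_mul_betaIntegral (ha : 0 < a.re) (hb : 0 < b.re) (z : ℂ)
    {N m : ℕ} (hm : 2 * m ≤ N) :
    regularizedHGFunCoeff 0 {a + b + 1 / 2} m * (-(z ^ 2 / 4)) ^ m *
        (regularizedHGFunCoeff 0 0 (N - 2 * m) * z ^ (N - 2 * m)) *
          betaIntegral (b + (m + (N - 2 * m) : ℕ)) (a + m) =
      betaIntegral b a / Gamma (a + b + 1 / 2) *
        (z ^ N / ((ascPochhammer ℂ N).eval (a + b) * N.factorial)) *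
          quadraticTransformTerm a b N m := by
  have hc : 0 < (a + b + 1 / 2).re := by simpa using by positivity
  have hfac : ((N - 2 * m).factorial : ℂ)⁻¹ = N.descFactorial (2 * m) * (N.factorial : ℂ)⁻¹ := by
    rw [inv_eq_iff_eq_inv, mul_inv_rev, inv_inv, ← Nat.factorial_mul_descFactorial hm, Nat.cast_mul,
      mul_inv_cancel_right₀ (mod_cast (Nat.descFactorial_pos.2 hm).ne')]
  have hz : z ^ N = (z ^ 2) ^ m * z ^ (N - 2 * m) := by
    rw [← pow_mul, ← pow_add, Nat.add_sub_cancel' hm]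
  have hpow : (-(z ^ 2 / 4)) ^ m = (-1 / 4) ^ m * (z ^ 2) ^ m := by
    rw [← mul_pow]
    ring
  have hsub : m + (N - 2 * m) = N - m := by lia
  have hadd : N - m + m = N := by lia
  rw [betaIntegral_add_natCast hb ha, quadraticTransformTerm, hsub, hadd, hz, add_comm b a, hpow]
  simp only [regularizedHGFunCoeff, Multiset.map_zero, Multiset.prod_zero, Multiset.map_singleton,
    Multiset.prod_singleton, Gamma_add_natCast (ne_neg_natCast_of_re_pos hc)]
  simp only [mul_one, one_div, hfac]
  ring

lemma sum_regularizedHGFunCoeff_mul_betaIntegral (ha : 0 < a.re) (hb : 0 < b.re) (z : ℂ) (N : ℕ) :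
    ∑ m ∈ Finset.range (N / 2 + 1),
        regularizedHGFunCoeff 0 {a + b + 1 / 2} m * (-(z ^ 2 / 4)) ^ m *
          (regularizedHGFunCoeff 0 0 (N - 2 * m) * z ^ (N - 2 * m)) *
            betaIntegral (b + (m + (N - 2 * m) : ℕ)) (a + m) =
      betaIntegral b a * Gamma (2 * (a + b)) / Gamma (a + b + 1 / 2) *
        (regularizedHGFunCoeff {2 * b} {2 * (a + b)} N * z ^ N) := by
  have hab : 0 < (a + b).re := add_pos ha hb
  have h2ab : ∀ k : ℕ, 2 * (a + b) ≠ -k := ne_neg_natCast_of_re_pos (by simpa using hab)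
  have hab' := ascPochhammer_eval_ne_zero (ne_neg_natCast_of_re_pos hab) N
  have hG := Gamma_ne_zero h2ab
  rw [Finset.sum_congr rfl fun m hm => regularizedHGFunCoeff_mul_betaIntegral ha hb z
    (by rw [Finset.mem_range] at hm; lia), ← Finset.mul_sum,
    sum_quadraticTransformTerm h2ab (by lia)]
  simp only [regularizedHGFunCoeff, Multiset.map_singleton, Multiset.prod_singleton,
    Gamma_add_natCast h2ab]
  generalize Gamma (2 * (a + b)) = G at *
  generalize (ascPochhammer ℂ N).eval (2 * (a + b)) = P
  field_simp

theorem integral_exp_mul_regularizedHGFun (ha : 0 < a.re) (hb : 0 < b.re) (z : ℂ) :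
    ∫ ξ in (0 : ℝ)..1, (ξ : ℂ) ^ (b - 1) * (1 - (ξ : ℂ)) ^ (a - 1) *
        (regularizedHGFun 0 {a + b + 1 / 2} (-(ξ * (1 - ξ) * (z ^ 2 / 4))) * exp (ξ * z)) =
      betaIntegral b a * Gamma (2 * (a + b)) / Gamma (a + b + 1 / 2) *
        regularizedHGFun {2 * b} {2 * (a + b)} z := by
  let c : ℕ × ℕ → ℂ := fun x =>
    regularizedHGFunCoeff 0 {a + b + 1 / 2} x.1 * (-(z ^ 2 / 4)) ^ x.1 *
      (regularizedHGFunCoeff 0 0 x.2 * z ^ x.2)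
  have hc : Summable fun x => ‖c x‖ :=
    summable_norm_regularizedHGFunCoeff_mul_pow_mul (by simp) le_rfl _ _
  have hexpand (ξ : ℝ) : HasSum (fun x => c x * ((ξ : ℂ) ^ (x.1 + x.2) * (1 - (ξ : ℂ)) ^ x.1))
      (regularizedHGFun 0 {a + b + 1 / 2} (-(ξ * (1 - ξ) * (z ^ 2 / 4))) * exp (ξ * z)) := by
    have hterm (x : ℕ × ℕ) : c x * ((ξ : ℂ) ^ (x.1 + x.2) * (1 - (ξ : ℂ)) ^ x.1) =
        regularizedHGFunCoeff 0 {a + b + 1 / 2} x.1 * (-(ξ * (1 - ξ) * (z ^ 2 / 4))) ^ x.1 *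
          (regularizedHGFunCoeff 0 0 x.2 * (ξ * z) ^ x.2) := by
      simp only [c]
      rw [← mul_neg, mul_pow, mul_pow, mul_pow, pow_add]
      ring
    simp only [hterm]
    rw [← regularizedHGFun_zero_zero]
    exact hasSum_regularizedHGFun_mul (by simp) le_rfl _ _
  have hint := hasSum_sum_range_of_two_mul_add <| hasSum_mul_betaIntegral_add_natCast hb ha hc
    (fun x => x.1 + x.2) Prod.fst fun ξ _ => hexpand ξ
  simp only [c, sum_regularizedHGFunCoeff_mul_betaIntegral ha hb] at hint
  exact hint.unique ((hasSum_regularizedHGFun (by simp) z).mul_left _)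

lemma betaIntegral_mul_Gamma_two_mul_div_Gamma_add_half (ha : 0 < a.re) (hb : 0 < b.re) :
    betaIntegral b a * Gamma (2 * (a + b)) / Gamma (a + b + 1 / 2) =
      Gamma a * Gamma b * 2 ^ (2 * (a + b) - 1) / √π := by
  have hab : 0 < (a + b).re := add_pos ha hb
  have hG := Gamma_ne_zero_of_re_pos hab
  have hG' : Gamma (a + b + 1 / 2) ≠ 0 := Gamma_ne_zero_of_re_pos (by simpa using by positivity)
  have hdup := Gamma_mul_Gamma_add_half (a + b)
  have hpow : (2 : ℂ) ^ (1 - 2 * (a + b)) * 2 ^ (2 * (a + b) - 1) = 1 := by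
    rw [← cpow_add _ _ two_ne_zero, ← cpow_zero 2]
    ring_nf
  have hpi : (√π : ℂ) ≠ 0 := ofReal_ne_zero.2 (Real.sqrt_ne_zero'.2 Real.pi_pos)
  rw [betaIntegral_eq_Gamma_mul_div _ _ hb ha, add_comm b a, div_mul_eq_mul_div, div_div, hdup,
    div_eq_div_iff (by rw [← hdup]; exact mul_ne_zero hG hG') hpi]
  linear_combination -Gamma a * Gamma b * Gamma (2 * (a + b)) * √π * hpow

end EulerIntegral

section BesselWhittaker

open Complex

lemma ofReal_mul_cpow {r : ℝ} (hr : 0 < r) {z : ℂ} (hz : z ≠ 0) (s : ℂ) :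
    (r * z) ^ s = (r : ℂ) ^ s * z ^ s := by
  have hr' : (r : ℂ) ≠ 0 := ofReal_ne_zero.2 hr.ne'
  rw [cpow_def_of_ne_zero (mul_ne_zero hr' hz), cpow_def_of_ne_zero hr', cpow_def_of_ne_zero hz,
    log_ofReal_mul hr hz, ← ofReal_log hr.le, add_mul, exp_add]

lemma ofReal_sqrt_cpow {x : ℝ} (hx : 0 ≤ x) (s : ℂ) : (√x : ℂ) ^ s = (x : ℂ) ^ (s / 2) := by
  rw [Real.sqrt_eq_rpow, ← cpow_mul_ofReal_nonneg hx]
  push_cast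
  ring_nf

lemma div_two_cpow {z : ℂ} (hz : z ≠ 0) (s : ℂ) : (z / 2) ^ s = z ^ s / 2 ^ s := by
  have h2 : (2 : ℂ) ^ s ≠ 0 := by simp [cpow_eq_zero_iff]
  have hmul := ofReal_mul_cpow two_pos (div_ne_zero hz two_ne_zero) s
  rw [ofReal_ofNat, mul_div_cancel₀ _ two_ne_zero] at hmul
  rw [hmul, mul_div_cancel_left₀ _ h2]

lemma besselJ_eq_regularizedHGFun (ν : ℂ) {z : ℂ} (hz : z ≠ 0) :
    besselJ ν z = (z / 2) ^ ν * regularizedHGFun 0 {ν + 1} (-(z / 2) ^ 2) := by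
  have hz2 : z / 2 ≠ 0 := div_ne_zero hz two_ne_zero
  rw [← (hasSum_regularizedHGFun (by simp) _).tsum_eq, ← tsum_mul_left, besselJ]
  refine tsum_congr fun n => ?_
  have hpow : (z / 2) ^ (ν + 2 * n) = (z / 2) ^ ν * ((z / 2) ^ 2) ^ n := by
    rw [cpow_add _ _ hz2, ← pow_mul]
    exact_mod_cast rfl
  rw [hpow, neg_pow ((z / 2) ^ 2)]
  simp only [regularizedHGFunCoeff, Multiset.map_zero, Multiset.prod_zero, Multiset.map_singleton,
    Multiset.prod_singleton, add_right_comm ν 1]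
  ring

lemma besselJ_sqrt_mul (ν : ℂ) {x : ℝ} (hx : 0 < x) {z : ℂ} (hz : z ≠ 0) :
    besselJ ν (√x * z) = (x : ℂ) ^ (ν / 2) * (z / 2) ^ ν *
      regularizedHGFun 0 {ν + 1} (-(x * (z ^ 2 / 4))) := by
  have hx' : 0 < √x := Real.sqrt_pos.2 hx
  have hsq : -(√x * (z / 2)) ^ 2 = -((x : ℂ) * (z ^ 2 / 4)) := by
    rw [mul_pow, ← ofReal_pow, Real.sq_sqrt hx.le]
    ring
  rw [besselJ_eq_regularizedHGFun ν (mul_ne_zero (ofReal_ne_zero.2 hx'.ne') hz), mul_div_assoc,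
    ofReal_mul_cpow hx' (div_ne_zero hz two_ne_zero), ofReal_sqrt_cpow hx.le, hsq]

lemma poch_eq_ascPochhammer_eval (x : ℂ) (n : ℕ) : poch x n = (ascPochhammer ℂ n).eval x := by
  induction n with
  | zero => simp [poch]
  | succ n ih => rw [ascPochhammer_succ_eval, ← ih, poch, Finset.prod_range_succ, poch]

lemma whittakerM_eq_regularizedHGFun {κ μ : ℂ} (hμ : ∀ k : ℕ, 2 * μ + 1 ≠ -k) (z : ℂ) :
    whittakerM κ μ z = exp (-z / 2) * z ^ (μ + 1 / 2) *
      (Gamma (2 * μ + 1) * regularizedHGFun {μ - κ + 1 / 2} {2 * μ + 1} z) := by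
  rw [← (hasSum_regularizedHGFun (by simp) _).tsum_eq, ← tsum_mul_left, whittakerM]
  congr 1
  refine tsum_congr fun n => ?_
  have hG := Gamma_ne_zero hμ
  simp only [regularizedHGFunCoeff, poch_eq_ascPochhammer_eval, Multiset.map_singleton,
    Multiset.prod_singleton, Gamma_add_natCast hμ]
  generalize Gamma (2 * μ + 1) = G at *
  field_simp

lemma whittakerM_integrand_eq (κ μ : ℂ) {z : ℂ} (hz : z ≠ 0) {ξ : ℝ}
    (hξ : ξ ∈ Set.Ioo (0 : ℝ) 1) :
    (ξ : ℂ) ^ ((-κ + 1 / 2) / 2 - 1) * ((1 : ℂ) - (ξ : ℂ)) ^ ((κ + 1 / 2) / 2 - 1) *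
        exp (((ξ : ℂ) - 1 / 2) * z) * besselJ μ ((√(ξ * (1 - ξ)) : ℂ) * z) =
      exp (-z / 2) * (z / 2) ^ μ *
        ((ξ : ℂ) ^ ((μ - κ + 1 / 2) / 2 - 1) * (1 - (ξ : ℂ)) ^ ((μ + κ + 1 / 2) / 2 - 1) *
          (regularizedHGFun 0 {μ + 1} (-(ξ * (1 - ξ) * (z ^ 2 / 4))) * exp (ξ * z))) := by
  have h0 : (ξ : ℂ) ≠ 0 := ofReal_ne_zero.2 hξ.1.ne'
  have h1 : 1 - (ξ : ℂ) ≠ 0 := mod_cast (sub_pos.2 hξ.2).ne'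
  have hexp : exp ((ξ - 1 / 2) * z) = exp (-z / 2) * exp (ξ * z) := by
    rw [← exp_add]
    ring_nf
  have hb : (μ - κ + 1 / 2) / 2 - 1 = (-κ + 1 / 2) / 2 - 1 + μ / 2 := by ring
  have ha : (μ + κ + 1 / 2) / 2 - 1 = (κ + 1 / 2) / 2 - 1 + μ / 2 := by ring
  have hprod : ((ξ * (1 - ξ) : ℝ) : ℂ) ^ (μ / 2) =
      (ξ : ℂ) ^ (μ / 2) * (1 - (ξ : ℂ)) ^ (μ / 2) := by
    rw [ofReal_mul, ofReal_mul_cpow hξ.1 (mod_cast h1), ofReal_sub, ofReal_one]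
  rw [besselJ_sqrt_mul μ (mul_pos hξ.1 (sub_pos.2 hξ.2)) hz, hprod, hexp, hb, ha,
    cpow_add _ _ h0, cpow_add _ _ h1]
  push_cast
  ring

lemma integral_exp_mul_besselJ (κ μ : ℂ) {z : ℂ} (hz : z ≠ 0)
    (h₁ : 0 < (μ + κ + 1 / 2).re) (h₂ : 0 < (μ - κ + 1 / 2).re) :
    ∫ ξ in (0 : ℝ)..1,
        (ξ : ℂ) ^ ((-κ + 1 / 2) / 2 - 1) * ((1 : ℂ) - (ξ : ℂ)) ^ ((κ + 1 / 2) / 2 - 1) *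
          exp (((ξ : ℂ) - 1 / 2) * z) * besselJ μ ((√(ξ * (1 - ξ)) : ℂ) * z) =
      exp (-z / 2) * (z / 2) ^ μ *
        (Gamma ((μ + κ + 1 / 2) / 2) * Gamma ((μ - κ + 1 / 2) / 2) * 2 ^ (2 * μ) / √π *
          regularizedHGFun {μ - κ + 1 / 2} {2 * μ + 1} z) := by
  have ha : 0 < ((μ + κ + 1 / 2) / 2).re := by simpa using h₁
  have hb : 0 < ((μ - κ + 1 / 2) / 2).re := by simpa using h₂
  have hab : (μ + κ + 1 / 2) / 2 + (μ - κ + 1 / 2) / 2 = μ + 1 / 2 := by ring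
  have hc : μ + 1 / 2 + 1 / 2 = μ + 1 := by ring
  have h2c : 2 * (μ + 1 / 2) = 2 * μ + 1 := by ring
  have h2b : 2 * ((μ - κ + 1 / 2) / 2) = μ - κ + 1 / 2 := by ring
  have hint := integral_exp_mul_regularizedHGFun ha hb z
  rw [betaIntegral_mul_Gamma_two_mul_div_Gamma_add_half ha hb, hab, hc, h2c, h2b,
    add_sub_cancel_right] at hint
  rw [intervalIntegral.integral_congr_Ioo_of_le zero_le_one fun ξ hξ =>
      whittakerM_integrand_eq κ μ hz hξ, intervalIntegral.integral_const_mul, hint]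

end BesselWhittaker

theorem whittakerM_integral_repr_general (κ μ : ℂ) {z : ℂ} (hz : z ≠ 0)
    (h₁ : 0 < (μ + κ + 1 / 2).re) (h₂ : 0 < (μ - κ + 1 / 2).re) :
    whittakerM κ μ z =
      (Real.sqrt π * Complex.Gamma (2 * μ + 1)) /
          ((2 : ℂ) ^ μ * Complex.Gamma ((μ + κ + 1 / 2) / 2) *
            Complex.Gamma ((μ - κ + 1 / 2) / 2)) *
        (z ^ (1 / 2 : ℂ) *
          ∫ ξ in (0:ℝ)..1,
            (ξ : ℂ) ^ ((-κ + 1 / 2) / 2 - 1) * ((1 : ℂ) - (ξ : ℂ)) ^ ((κ + 1 / 2) / 2 - 1) *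
              Complex.exp (((ξ : ℂ) - 1 / 2) * z) *
              besselJ μ ((Real.sqrt (ξ * (1 - ξ)) : ℂ) * z)) := by
  have hμ : 0 < (2 * μ + 1).re := by
    rw [show 2 * μ + 1 = (μ + κ + 1 / 2) + (μ - κ + 1 / 2) by ring]
    exact add_pos h₁ h₂
  have hΓa : Complex.Gamma ((μ + κ + 1 / 2) / 2) ≠ 0 :=
    Complex.Gamma_ne_zero_of_re_pos (by simpa using h₁)
  have hΓb : Complex.Gamma ((μ - κ + 1 / 2) / 2) ≠ 0 :=
    Complex.Gamma_ne_zero_of_re_pos (by simpa using h₂)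
  have hpi : (√π : ℂ) ≠ 0 := Complex.ofReal_ne_zero.2 (Real.sqrt_ne_zero'.2 Real.pi_pos)
  have h2 : (2 : ℂ) ^ μ ≠ 0 := by simp [Complex.cpow_eq_zero_iff]
  rw [whittakerM_eq_regularizedHGFun (ne_neg_natCast_of_re_pos hμ), Complex.cpow_add _ _ hz,
    integral_exp_mul_besselJ κ μ hz h₁ h₂, div_two_cpow hz, two_mul μ,
    Complex.cpow_add _ _ two_ne_zero]
  generalize Complex.Gamma ((μ + κ + 1 / 2) / 2) = A at *
  generalize Complex.Gamma ((μ - κ + 1 / 2) / 2) = B at *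
  field_simp

/-- Integral representation of the Whittaker function of the first kind. -/
theorem whittakerM_integral_repr (κ μ : ℂ) (z : ℝ) (hz : 0 < z)
    (h₁ : 0 < (μ + κ + 1 / 2).re) (h₂ : 0 < (μ - κ + 1 / 2).re) :
    whittakerM κ μ z =
      (Real.sqrt π * Complex.Gamma (2 * μ + 1)) /
          ((2 : ℂ) ^ μ * Complex.Gamma ((μ + κ + 1 / 2) / 2) *
            Complex.Gamma ((μ - κ + 1 / 2) / 2)) *
        ((Real.sqrt z : ℂ) *
          ∫ ξ in (0:ℝ)..1,
            (ξ : ℂ) ^ ((-κ + 1 / 2) / 2 - 1) * ((1 : ℂ) - (ξ : ℂ)) ^ ((κ + 1 / 2) / 2 - 1) *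
              Complex.exp (((ξ : ℂ) - 1 / 2) * z) *
              besselJ μ ((Real.sqrt (ξ * (1 - ξ)) : ℂ) * z)) := by
  have hsqrt : (√z : ℂ) = (z : ℂ) ^ (1 / 2 : ℂ) := by simpa using ofReal_sqrt_cpow hz.le 1
  rw [hsqrt]
  exact whittakerM_integral_repr_general κ μ (Complex.ofReal_ne_zero.2 hz.ne') h₁ h₂
end

section
/- Let a, b, z be complex numbers with Re(a) > 0, Re(b − a) > 0, and Re(b + 1/2) > 0. Then Kummer's confluent hypergeometric function satisfies the summation formula M(2a; 2b; z) = Σ_{n=0}^∞ ((a)_n (b)_n (b−a)_n / ((b)_{2n} (2b)_{2n} · n!)) · (−z²)^n · M(a+n; b+2n; z). -/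
/-- Kummer's confluent hypergeometric function `M(a; b; z)`. -/
noncomputable def kummerM (a b z : ℂ) : ℂ :=
  ∑' n : ℕ, poch a n / (poch b n * n.factorial) * z ^ n

/-!
Expanding `M(a + n; b + 2n; z)` turns the right-hand side into an absolutely convergent double
series. Collecting the coefficient of `z ^ N` leaves a terminating sum over `n`, namely the
Saalschützian `₃F₂(-N/2, (1-N)/2, b-a; 1-a-N, b+1/2; 1)`, whose value is
`(2a)_N (b)_N / (2b)_N`; it is evaluated by a recurrence in `N` with telescoping right-hand side.
-/

open Filter Finset Topology

section Pochhammer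

lemma poch_zero (x : ℂ) : poch x 0 = 1 := prod_range_zero _

lemma poch_succ (x : ℂ) (n : ℕ) : poch x (n + 1) = poch x n * (x + n) := prod_range_succ _ n

lemma poch_add (x : ℂ) (m n : ℕ) : poch x (m + n) = poch x m * poch (x + m) n := by
  simp only [poch, prod_range_add, Nat.cast_add, add_assoc]

lemma poch_two_mul (x : ℂ) (n : ℕ) :
    poch (2 * x) (2 * n) = 4 ^ n * poch x n * poch (x + 1 / 2) n := by
  induction n with
  | zero => simp only [mul_zero, poch_zero, pow_zero, mul_one]
  | succ n ih =>
    rw [mul_add_one, poch_succ, poch_succ, poch_succ, poch_succ, ih]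
    push_cast
    ring

lemma poch_ne_zero {x : ℂ} (hx : ∀ k : ℕ, x + k ≠ 0) (n : ℕ) : poch x n ≠ 0 :=
  prod_ne_zero_iff.mpr fun k _ ↦ hx k

lemma add_natCast_ne_zero_of_two_mul {x : ℂ} (hx : ∀ k : ℕ, 2 * x + k ≠ 0) (k : ℕ) :
    x + k ≠ 0 := fun h ↦ hx (2 * k) (by push_cast; linear_combination 2 * h)

lemma add_half_add_natCast_ne_zero_of_two_mul {x : ℂ} (hx : ∀ k : ℕ, 2 * x + k ≠ 0) (k : ℕ) :
    x + 1 / 2 + k ≠ 0 := fun h ↦ hx (2 * k + 1) (by push_cast; linear_combination 2 * h)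

lemma exists_norm_add_mul_natCast_div_le (p q d : ℂ) :
    ∃ C : ℝ, ∀ k : ℕ, ‖(p + q * k) / (d + k)‖ ≤ C := by
  have ratio_tendsto : Tendsto (fun k : ℕ ↦ (p + q * k) / (d + k)) atTop (𝓝 q) := by
    simpa only [one_mul, div_one] using
      tendsto_add_mul_div_add_mul_atTop_nhds p d q (one_ne_zero : (1 : ℂ) ≠ 0)
  obtain ⟨C, hC⟩ := ratio_tendsto.norm.bddAbove_range
  exact ⟨C, fun k ↦ hC ⟨k, rfl⟩⟩

lemma poch_div_poch_add (c d : ℂ) (m n : ℕ) :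
    poch c m / poch d (m + n) =
      (∏ k ∈ range m, (c + k) / (d + k)) * ∏ k ∈ range n, 1 / (d + (m + k : ℕ)) := by
  simp only [poch, prod_range_add, prod_div_distrib, prod_const_one]
  ring

lemma exists_norm_poch_div_poch_add_le (c d : ℂ) :
    ∃ R : ℝ, 0 ≤ R ∧ ∀ m n : ℕ, ‖poch c m / poch d (m + n)‖ ≤ R ^ (m + n) := by
  obtain ⟨C, hC⟩ := exists_norm_add_mul_natCast_div_le c 1 d
  obtain ⟨E, hE⟩ := exists_norm_add_mul_natCast_div_le 1 0 d
  simp only [one_mul, zero_mul, add_zero] at hC hE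
  have norm_prod_le {f : ℕ → ℂ} (hf : ∀ k, ‖f k‖ ≤ max C E) (n : ℕ) :
      ‖∏ k ∈ range n, f k‖ ≤ max C E ^ n := by
    rw [norm_prod]
    simpa only [prod_const, card_range] using
      prod_le_prod (s := range n) (fun k _ ↦ norm_nonneg (f k)) fun k _ ↦ hf k
  have R_nonneg : 0 ≤ max C E := (norm_nonneg _).trans ((hC 0).trans (le_max_left C E))
  refine ⟨max C E, R_nonneg, fun m n ↦ ?_⟩
  rw [poch_div_poch_add, norm_mul, pow_add]
  exact mul_le_mul (norm_prod_le (fun k ↦ (hC k).trans (le_max_left C E)) m)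
    (norm_prod_le (fun k ↦ (hE (m + k)).trans (le_max_right C E)) n)
    (norm_nonneg _) (pow_nonneg R_nonneg m)

end Pochhammer

section SaalschutzSum

lemma cast_descFactorial_succ {R : Type*} [Ring R] (N k : ℕ) :
    (N.descFactorial (k + 1) : R) = N.descFactorial k * (N - k) := by
  simp only [← descPochhammer_eval_eq_descFactorial, descPochhammer_succ_eval]

/-- The `n`-th term of the Saalschützian sum `(a)_N · ₃F₂(-N/2, (1-N)/2, b-a; 1-a-N, b+1/2; 1)`.
The descending factorial makes it vanish for `N < 2 * n`, where `N - n` may be truncated. -/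
noncomputable def saalschutzTerm (a b : ℂ) (N n : ℕ) : ℂ :=
  (-1) ^ n * poch (b - a) n * poch a (N - n) * N.descFactorial (2 * n) /
    (4 ^ n * poch (b + 1 / 2) n * n.factorial)

variable (a : ℂ) {b : ℂ}

lemma saalschutzTerm_zero_right (b : ℂ) (N : ℕ) : saalschutzTerm a b N 0 = poch a N := by
  simp [saalschutzTerm, poch_zero]

lemma saalschutzTerm_eq_zero (b : ℂ) {N n : ℕ} (h : N < 2 * n) : saalschutzTerm a b N n = 0 := by
  simp [saalschutzTerm, Nat.descFactorial_of_lt h]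

lemma saalschutzTerm_succ_succ (hb : ∀ k : ℕ, b + 1 / 2 + k ≠ 0) (N n : ℕ) :
    4 * (b + 1 / 2 + n) * (n + 1) * saalschutzTerm a b (N + 1) (n + 1) =
      -((N + 1) * (N - 2 * n) * (b - a + n) * saalschutzTerm a b N n) := by
  have succ_ne_zero : (n : ℂ) + 1 ≠ 0 := n.cast_add_one_ne_zero
  have shift_ne_zero : b * 2 + 1 + 2 * n ≠ 0 := fun h ↦ hb n (by linear_combination h / 2)
  simp only [saalschutzTerm, poch_succ, Nat.add_sub_add_right, mul_add_one,
    Nat.succ_descFactorial_succ, Nat.factorial_succ, Nat.cast_mul,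
    cast_descFactorial_succ, pow_succ]
  push_cast
  field_simp

lemma saalschutzTerm_succ_right (hb : ∀ k : ℕ, b + 1 / 2 + k ≠ 0) (N n : ℕ) :
    4 * (b + 1 / 2 + n) * (n + 1) * (a + N - n - 1) * saalschutzTerm a b N (n + 1) =
      -((N - 2 * n) * (N - 2 * n - 1) * (b - a + n) * saalschutzTerm a b N n) := by
  have succ_ne_zero : (n : ℂ) + 1 ≠ 0 := n.cast_add_one_ne_zero
  have shift_ne_zero : b * 2 + 1 + 2 * n ≠ 0 := fun h ↦ hb n (by linear_combination h / 2)
  rcases le_or_gt N n with hNn | hnN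
  · rw [saalschutzTerm_eq_zero a b (show N < 2 * (n + 1) by lia)]
    rcases Nat.eq_zero_or_pos n with rfl | hn0
    · simp [Nat.le_zero.mp hNn]
    · rw [saalschutzTerm_eq_zero a b (show N < 2 * n by lia)]
      ring
  · obtain ⟨r, rfl⟩ := Nat.exists_eq_add_of_lt hnN
    have sub_eq_succ : n + r + 1 - n = r + 1 := by lia
    have sub_succ_eq : n + r + 1 - (n + 1) = r := by lia
    simp only [saalschutzTerm, sub_eq_succ, sub_succ_eq, poch_succ, mul_add_one,
      Nat.factorial_succ, Nat.cast_mul, cast_descFactorial_succ, pow_succ]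
    push_cast
    field_simp
    ring

-- Zeilberger's recurrence: the right-hand side is the difference in `n` of the certificate
-- `saalschutzTerm a b N n * (b - a + n) * (N - 2 * n)`.
lemma saalschutzTerm_recurrence (hb : ∀ k : ℕ, b + 1 / 2 + k ≠ 0) (N n : ℕ) :
    (2 * b + N) * saalschutzTerm a b (N + 1) (n + 1) -
        (2 * a + N) * (b + N) * saalschutzTerm a b N (n + 1) =
      saalschutzTerm a b N (n + 1) * (b - a + (n + 1 : ℕ)) * (N - 2 * (n + 1 : ℕ)) -
        saalschutzTerm a b N n * (b - a + n) * (N - 2 * n) := by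
  have common_factor_ne_zero : 4 * (b + 1 / 2 + n) * (n + 1) ≠ 0 :=
    mul_ne_zero (mul_ne_zero (by norm_num) (hb n)) n.cast_add_one_ne_zero
  refine mul_left_cancel₀ common_factor_ne_zero ?_
  push_cast
  linear_combination (2 * b + N) * saalschutzTerm_succ_succ a hb N n -
    (2 * b + N + 2 * n + 2) * saalschutzTerm_succ_right a hb N n

lemma sum_range_saalschutzTerm_telescope (hb : ∀ k : ℕ, b + 1 / 2 + k ≠ 0) (N K : ℕ) :
    ∑ n ∈ range (K + 1), ((2 * b + N) * saalschutzTerm a b (N + 1) n -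
        (2 * a + N) * (b + N) * saalschutzTerm a b N n) =
      saalschutzTerm a b N K * (b - a + K) * (N - 2 * K) := by
  induction K with
  | zero =>
    simp only [zero_add, sum_range_one, saalschutzTerm_zero_right, poch_succ]
    push_cast
    ring
  | succ K ih =>
    rw [sum_range_succ, ih, saalschutzTerm_recurrence a hb]
    ring

lemma sum_saalschutzTerm_mul_poch (hb : ∀ k : ℕ, b + 1 / 2 + k ≠ 0) (N : ℕ) :
    (∑ n ∈ range (N + 1), saalschutzTerm a b N n) * poch (2 * b) N =
      poch (2 * a) N * poch b N := by
  induction N with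
  | zero => simp [saalschutzTerm_zero_right, poch_zero]
  | succ N ih =>
    have term_eq_zero : saalschutzTerm a b N (N + 1) = 0 :=
      saalschutzTerm_eq_zero a b (by lia)
    have sum_recurrence :
        (2 * b + N) * ∑ n ∈ range (N + 2), saalschutzTerm a b (N + 1) n =
          (2 * a + N) * (b + N) * ∑ n ∈ range (N + 1), saalschutzTerm a b N n := by
      have h := sum_range_saalschutzTerm_telescope a hb N (N + 1)
      rw [sum_sub_distrib, ← mul_sum, ← mul_sum, sum_range_succ (saalschutzTerm a b N),
        term_eq_zero] at h
      linear_combination h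
    rw [poch_succ, poch_succ, poch_succ]
    linear_combination poch (2 * b) N * sum_recurrence + (2 * a + N) * (b + N) * ih

end SaalschutzSum

section DoubleSeries

/-- The contribution of the `n`-th summand of the right-hand side to the power `z ^ N`, as a term
of a double series over `(N, n)`. -/
noncomputable def kummerDoubleTerm (a b z : ℂ) (N n : ℕ) : ℂ :=
  saalschutzTerm a b N n * z ^ N / (N.factorial * poch b N)

lemma kummerDoubleTerm_eq_zero (a b z : ℂ) {N n : ℕ} (h : N < 2 * n) :
    kummerDoubleTerm a b z N n = 0 := by
  rw [kummerDoubleTerm, saalschutzTerm_eq_zero a b h, zero_mul, zero_div]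

lemma kummerDoubleTerm_two_mul_add (a b z : ℂ) (n k : ℕ) :
    kummerDoubleTerm a b z (2 * n + k) n =
      poch (b - a) n / poch (b + 1 / 2) n * (poch a (n + k) / poch b (2 * n + k)) *
        ((-z ^ 2 / 4) ^ n / n.factorial * (z ^ k / k.factorial)) := by
  have factorial_eq :
      ((2 * n + k).factorial : ℂ) = k.factorial * (2 * n + k).descFactorial (2 * n) := by
    exact_mod_cast Nat.add_sub_cancel_left (n := 2 * n) (m := k) ▸
      (Nat.factorial_mul_descFactorial (Nat.le_add_right (2 * n) k)).symm
  have descFactorial_ne_zero : ((2 * n + k).descFactorial (2 * n) : ℂ) ≠ 0 := by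
    rw [Nat.cast_ne_zero, Ne, Nat.descFactorial_eq_zero_iff_lt]
    lia
  rw [kummerDoubleTerm, saalschutzTerm, factorial_eq, show 2 * n + k - n = n + k by lia,
    div_pow, neg_pow (z ^ 2), ← pow_mul, pow_add]
  field_simp

lemma kummerDoubleTerm_support_subset (a b z : ℂ) (n : ℕ) :
    Function.support (fun N ↦ kummerDoubleTerm a b z N n) ⊆ Set.range (2 * n + ·) :=
  fun _ h ↦ by
    obtain ⟨k, hk⟩ := Nat.exists_eq_add_of_le
      (not_lt.mp (mt (kummerDoubleTerm_eq_zero a b z) h))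
    exact ⟨k, hk.symm⟩

lemma exists_norm_kummerDoubleTerm_le (a b z : ℂ) :
    ∃ A B : ℝ, 0 ≤ A ∧ 0 ≤ B ∧ ∀ n k : ℕ,
      ‖kummerDoubleTerm a b z (2 * n + k) n‖ ≤ A ^ n / n.factorial * (B ^ k / k.factorial) := by
  obtain ⟨R, hR, norm_le_R⟩ := exists_norm_poch_div_poch_add_le (b - a) (b + 1 / 2)
  obtain ⟨S, hS, norm_le_S⟩ := exists_norm_poch_div_poch_add_le a b
  refine ⟨R * S ^ 2 * (‖z‖ ^ 2 / 4), S * ‖z‖, by positivity, by positivity, fun n k ↦ ?_⟩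
  have hRn : ‖poch (b - a) n / poch (b + 1 / 2) n‖ ≤ R ^ n := norm_le_R n 0
  have hSnk : ‖poch a (n + k) / poch b (2 * n + k)‖ ≤ S ^ (2 * n + k) := by
    simpa only [show n + k + n = 2 * n + k by ring] using norm_le_S (n + k) n
  calc ‖kummerDoubleTerm a b z (2 * n + k) n‖
    _ = ‖poch (b - a) n / poch (b + 1 / 2) n‖ * ‖poch a (n + k) / poch b (2 * n + k)‖ *
        ((‖z‖ ^ 2 / 4) ^ n / n.factorial * (‖z‖ ^ k / k.factorial)) := by
      rw [kummerDoubleTerm_two_mul_add]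
      simp only [norm_mul, norm_div, norm_pow, norm_neg, RCLike.norm_natCast, RCLike.norm_ofNat]
    _ ≤ R ^ n * S ^ (2 * n + k) *
        ((‖z‖ ^ 2 / 4) ^ n / n.factorial * (‖z‖ ^ k / k.factorial)) := by gcongr
    _ = (R * S ^ 2 * (‖z‖ ^ 2 / 4)) ^ n / n.factorial * ((S * ‖z‖) ^ k / k.factorial) := by ring

lemma summable_kummerDoubleTerm (a b z : ℂ) :
    Summable (Function.uncurry (kummerDoubleTerm a b z)) := by
  obtain ⟨A, B, hA, hB, norm_le⟩ := exists_norm_kummerDoubleTerm_le a b z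
  have shift_injective : Function.Injective fun p : ℕ × ℕ ↦ (2 * p.1 + p.2, p.1) := by
    rintro ⟨n, k⟩ ⟨n', k'⟩ h
    simp only [Prod.mk.injEq] at h ⊢
    lia
  rw [← shift_injective.summable_iff]
  · refine .of_norm_bounded ((Real.summable_pow_div_factorial A).mul_of_nonneg
      (Real.summable_pow_div_factorial B) ?_ ?_) fun p ↦ norm_le p.1 p.2
    all_goals exact fun n ↦ by positivity
  · rintro ⟨N, n⟩ h
    by_contra hN
    obtain ⟨k, rfl⟩ := kummerDoubleTerm_support_subset a b z n hN
    exact h ⟨(n, k), rfl⟩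

variable (a z : ℂ) {b : ℂ}

lemma tsum_kummerDoubleTerm_right (hb : ∀ k : ℕ, 2 * b + k ≠ 0) (N : ℕ) :
    ∑' n, kummerDoubleTerm a b z N n =
      poch (2 * a) N / (poch (2 * b) N * N.factorial) * z ^ N := by
  have poch_b_ne_zero := poch_ne_zero (add_natCast_ne_zero_of_two_mul hb) N
  have poch_two_mul_b_ne_zero := poch_ne_zero hb N
  have sum_eq := sum_saalschutzTerm_mul_poch a (add_half_add_natCast_ne_zero_of_two_mul hb) N
  rw [tsum_eq_sum (s := range (N + 1)) fun n hn ↦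
    kummerDoubleTerm_eq_zero a b z (by rw [mem_range] at hn; lia)]
  simp only [kummerDoubleTerm]
  rw [← sum_div, ← sum_mul, eq_div_of_mul_eq poch_two_mul_b_ne_zero sum_eq]
  field_simp

lemma tsum_kummerDoubleTerm_left (hb : ∀ k : ℕ, b + k ≠ 0) (n : ℕ) :
    ∑' N, kummerDoubleTerm a b z N n =
      poch a n * poch b n * poch (b - a) n /
          (poch b (2 * n) * poch (2 * b) (2 * n) * n.factorial) * (-z ^ 2) ^ n *
        kummerM (a + n) (b + 2 * n) z := by
  have poch_b_ne_zero := poch_ne_zero hb n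
  rw [← (add_right_injective (2 * n)).tsum_eq (kummerDoubleTerm_support_subset a b z n), kummerM,
    ← tsum_mul_left]
  refine tsum_congr fun k ↦ ?_
  rw [kummerDoubleTerm_two_mul_add, poch_two_mul, poch_add a, poch_add b, div_pow]
  push_cast
  field_simp

end DoubleSeries

theorem kummerM_sum_formula_general (a b z : ℂ) (hb : ∀ k : ℕ, 2 * b + k ≠ 0) :
    kummerM (2 * a) (2 * b) z =
      ∑' n : ℕ, poch a n * poch b n * poch (b - a) n /
          (poch b (2 * n) * poch (2 * b) (2 * n) * n.factorial) * (-z ^ 2) ^ n *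
        kummerM (a + n) (b + 2 * n) z :=
  calc kummerM (2 * a) (2 * b) z
    _ = ∑' N, ∑' n, kummerDoubleTerm a b z N n :=
      tsum_congr fun N ↦ (tsum_kummerDoubleTerm_right a z hb N).symm
    _ = ∑' n, ∑' N, kummerDoubleTerm a b z N n := (summable_kummerDoubleTerm a b z).tsum_comm.symm
    _ = _ := tsum_congr <|
      tsum_kummerDoubleTerm_left a z (add_natCast_ne_zero_of_two_mul hb)

/-- Summation formula for Kummer's confluent hypergeometric function, under positivity
assumptions on the real parts of the parameters. -/
theorem kummerM_sum_formula (a b z : ℂ) (ha : 0 < a.re) (hba : 0 < (b - a).re)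
    (hb : 0 < (b + 1 / 2).re) :
    kummerM (2 * a) (2 * b) z =
      ∑' n : ℕ, poch a n * poch b n * poch (b - a) n /
          (poch b (2 * n) * poch (2 * b) (2 * n) * n.factorial) * (-z ^ 2) ^ n *
        kummerM (a + n) (b + 2 * n) z := by
  have b_re_pos : 0 < b.re := by simpa using add_pos ha hba
  refine kummerM_sum_formula_general a b z fun k ↦ Complex.ne_zero_of_re_pos ?_
  simpa using add_pos_of_pos_of_nonneg (mul_pos two_pos b_re_pos) k.cast_nonneg
end
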